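/- Let (A, m) be a complete Noetherian local ring and M a nonzero finitely generated A-module. Suppose there is an integer j such that the local cohomology modules H^i_m(M) vanish for all i ≠ j and H^j_m(M) is an injective A-module. Then A is a Cohen–Macaulay local ring with dim A = j, and M is a maximal Cohen–Macaulay A-module, i.e., depth_A M = dim M = dim A = j. -/

import Mathlib

/-!
STATEMENT 8: Let `(A, m)` be a complete Noetherian local ring and `M` a nonzero finitely
generated `A`-module.  Suppose there is an integer `j` such that the local cohomology
modules `H^i_m(M)` vanish for all `i ≠ j` and `H^j_m(M)` is an injective `A`-module.
Then `A` is a Cohen–Macaulay local ring with `dim A = j`, and `M` is a maximal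
Cohen–Macaulay `A`-module, i.e. `depth_A M = dim M = dim A = j`.
-/

universe u

open CategoryTheory

/-- `Ext^i_R(X, Y)` vanishes. -/
noncomputable def extVanishes (R : Type u) [CommRing R] (X Y : Type u)
    [AddCommGroup X] [Module R X] [AddCommGroup Y] [Module R Y] (i : ℕ) : Prop :=
  Subsingleton
    ↥(((Ext R (ModuleCat.{u} R) i).obj (Opposite.op (ModuleCat.of R X))).obj
      (ModuleCat.of R Y))

/-- The depth of a module `L` over a local ring `R`: `inf { i : Ext^i_R(κ, L) ≠ 0 }`. -/
noncomputable def moduleDepth (R : Type u) [CommRing R] [IsLocalRing R]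
    (L : Type u) [AddCommGroup L] [Module R L] : ℕ∞ :=
  sInf {n : ℕ∞ | ∃ i : ℕ, n = (i : ℕ∞) ∧
    ¬ extVanishes R (IsLocalRing.ResidueField R) L i}

/-!
Write `𝔪` for the maximal ideal. The module `H^i_𝔪(M)` is the direct limit of the modules
`Ext^i(A ⧸ 𝔪 ^ n, M)`. Vanishing of `H^i_𝔪(M)` for `i < j` yields an `M`-regular sequence
`x₁, …, x_j` in `𝔪` (Rees' theorem plus induction: in the first degree that is not yet known to
vanish the transition maps are injective, so vanishing of the limit forces vanishing of each term).
In degree `j` the transition maps are injective too, so `E = H^j_𝔪(M)` is the union of the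
`Ext^j(A ⧸ 𝔪 ^ n, M)`. It is nonzero, since otherwise all local cohomology of `M` would vanish
and `M` would have arbitrarily long regular sequences; as each of its elements is killed by a power
of `𝔪`, it contains a copy of the residue field.

Put `M_k = M ⧸ (x₁, …, x_k) M` and `I_k = (x₁, …, x_k)`. The long exact sequences for
multiplication by `x_{k+1}` on `M_k` identify the union of the `Ext^(j-k)(A ⧸ 𝔪 ^ n, M_k)` with
`E[I_k]`, the set of elements of `E` killed by `I_k` (`ExtExhausts.step`). Because `E` is injective
and contains the residue field, `E[I]` has annihilator `I` for every ideal `I`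
(`exists_smul_ne_zero`). Two consequences carry the proof.

* Anything killing `M_k` kills `E[I_k]`, so it lies in `I_k`: the annihilator of `M_k` is `I_k`.
  If `x_{k+1} b ∈ I_k`, then `x_{k+1} b` kills `M_k`, hence so does `b` by regularity, hence
  `b ∈ I_k`. So the sequence is also `A`-regular.
* `E[I_j]` is the union of the `Hom(A ⧸ 𝔪 ^ n, M_j)`. As `M_j` is Noetherian, its `𝔪`-power torsion
  is killed by one power of `𝔪`, which therefore lies in `I_j`.

Hence `x₁, …, x_j` is regular on both `A` and `M` and generates an `𝔪`-primary ideal, so both have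
depth and dimension `j`.

Local cohomology and depth are expressed with the `Ext` functor obtained by deriving `Hom` in its
first variable, whereas the long exact sequences and Rees' theorem are available for
`CategoryTheory.Abelian.Ext`; `bridge` is a natural linear isomorphism between the two.
-/

section Helpers
variable {A : Type u} [CommRing A]

/-! ### Comparison of the two definitions of `Ext` -/

/-- `Ext^n(X, Y)` as the left derived functor of `Hom(-, Y)`, with values in the
opposite category. -/
noncomputable abbrev OExt (A : Type u) [CommRing A] (X Y : ModuleCat.{u} A) (n : ℕ) :
    ModuleCat.{u} A :=
  ((Ext A (ModuleCat.{u} A) n).obj (Opposite.op X)).obj Y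

/-- The complex `Hom(P, Y)`, regarded as a chain complex in the opposite category. -/
noncomputable abbrev homCx {X : ModuleCat.{u} A} (P : ProjectiveResolution X) (Y : ModuleCat.{u} A) :
    ChainComplex (ModuleCat.{u} A)ᵒᵖ ℕ :=
  (((linearYoneda A (ModuleCat.{u} A)).obj Y).rightOp.mapHomologicalComplex _).obj P.complex

/-- The degree `n` cocycles of `Hom(P, Y)`, which are the opcycles of `homCx` in the opposite
category. -/
noncomputable abbrev cocyc {X : ModuleCat.{u} A} (P : ProjectiveResolution X) (Y : ModuleCat.{u} A) (n : ℕ) :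
   ModuleCat.{u} A := ((homCx P Y).opcycles n).unop

/-- The inclusion of the cocycles in `Hom(P_n, Y)`. -/
noncomputable def inc {X : ModuleCat.{u} A} (P : ProjectiveResolution X) (Y : ModuleCat.{u} A) (n : ℕ) :
   cocyc P Y n →ₗ[A] (P.complex.X n ⟶ Y) := ((homCx P Y).pOpcycles n).unop.hom

/-- Computation of the derived functor by an arbitrary projective resolution. -/
noncomputable def rhoIso {X : ModuleCat.{u} A} (P : ProjectiveResolution X) (Y : ModuleCat.{u} A) (n : ℕ) :
   ((homCx P Y).homology n).unop ≅ OExt A X Y n :=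
  (P.isoLeftDerivedObj ((linearYoneda A _).obj Y).rightOp n).unop

/-- The class of a cocycle in the derived functor `Ext`. -/
noncomputable def rho {X : ModuleCat.{u} A} (P : ProjectiveResolution X) (Y : ModuleCat.{u} A) (n : ℕ) :
   cocyc P Y n →ₗ[A] OExt A X Y n :=
  (rhoIso P Y n).hom.hom ∘ₗ ((homCx P Y).homologyι n).unop.hom

lemma rho_surj {X : ModuleCat.{u} A} (P : ProjectiveResolution X) (Y : ModuleCat.{u} A) (n : ℕ) :
    Function.Surjective (rho P Y n) := by
  have h : Epi (((homCx P Y).homologyι n).unop) := inferInstance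
  exact ((ModuleCat.epi_iff_surjective (rhoIso P Y n).hom).1 inferInstance).comp
    ((ModuleCat.epi_iff_surjective _).1 h)

lemma rho_eq_zero {X : ModuleCat.{u} A} (P : ProjectiveResolution X) (Y : ModuleCat.{u} A) (n : ℕ)
    (t : cocyc P Y n) : rho P Y n t = 0 ↔ ((homCx P Y).homologyι n).unop.hom t = 0 :=
  map_eq_zero_iff (rhoIso P Y n).hom.hom
    ((ModuleCat.mono_iff_injective (rhoIso P Y n).hom).1 inferInstance)

lemma inc_inj {X : ModuleCat.{u} A} (P : ProjectiveResolution X) (Y : ModuleCat.{u} A) (n : ℕ) :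
    Function.Injective (inc P Y n) := by
  have : Mono (((homCx P Y).pOpcycles n).unop) := inferInstance
  exact (ModuleCat.mono_iff_injective _).1 this

lemma inc_range {X : ModuleCat.{u} A} (P : ProjectiveResolution X) (Y : ModuleCat.{u} A) (n : ℕ)
    (f : P.complex.X n ⟶ Y) : (∃ t, inc P Y n t = f) ↔ P.complex.d (n+1) n ≫ f = 0 := by
  have h := (ShortComplex.exact_of_g_is_cokernel (ShortComplex.mk _ _ ((homCx P Y).d_pOpcycles (n+1) n))
    ((homCx P Y).opcyclesIsCokernel (n+1) n (by simp))).unop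
  rw [ShortComplex.moduleCat_exact_iff] at h
  constructor
  · rintro ⟨t, rfl⟩
    have := congr($((ShortComplex.mk _ _ ((homCx P Y).d_pOpcycles (n+1) n)).unop.zero).hom t)
    exact this
  · intro hf
    exact h f hf

lemma inc_comp {X : ModuleCat.{u} A} (P : ProjectiveResolution X) (Y : ModuleCat.{u} A) (n : ℕ) (t) :
     P.complex.d (n+1) n ≫ inc P Y n t = 0 := (inc_range P Y n _).1 ⟨t, rfl⟩

lemma rho_eq_zero_succ {X : ModuleCat.{u} A} (P : ProjectiveResolution X) (Y : ModuleCat.{u} A) (n : ℕ)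
    (t : cocyc P Y (n+1)) : rho P Y (n+1) t = 0 ↔
      ∃ g : P.complex.X n ⟶ Y, P.complex.d (n+1) n ≫ g = inc P Y (n+1) t := by
  have h := (ShortComplex.exact_of_f_is_kernel 
    (ShortComplex.mk _ _ ((homCx P Y).homologyι_comp_fromOpcycles (n+1) n))
    ((homCx P Y).homologyIsKernel (n+1) n (by simp))).unop
  rw [ShortComplex.moduleCat_exact_iff] at h
  have hc : ∀ g : P.complex.X n ⟶ Y,
      inc P Y (n+1) (((homCx P Y).fromOpcycles (n+1) n).unop.hom g) = P.complex.d (n+1) n ≫ g := by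
    intro g
    exact congr(($((homCx P Y).p_fromOpcycles (n+1) n)).unop.hom g)
  rw [rho_eq_zero]
  constructor
  · intro ht
    obtain ⟨g, hg⟩ : ∃ g : P.complex.X n ⟶ Y,
      ((homCx P Y).fromOpcycles (n+1) n).unop.hom g = t := h t ht
    exact ⟨g, (hc g).symm.trans congr(inc P Y (n+1) $hg)⟩
  · rintro ⟨g, hg⟩
    have := inc_inj _ _ _ ((hc g).trans hg)
    rw [← this]
    exact congr(($((homCx P Y).homologyι_comp_fromOpcycles (n+1) n)).unop.hom g)

lemma rho_eq_zero_zero {X : ModuleCat.{u} A} (P : ProjectiveResolution X) (Y : ModuleCat.{u} A)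
    (t : cocyc P Y 0) : rho P Y 0 t = 0 ↔ inc P Y 0 t = 0 := by
  rw [map_eq_zero_iff _ (inc_inj P Y 0), rho_eq_zero]
  have : IsIso ((homCx P Y).homologyι 0) := (homCx P Y).isIso_homologyι 0 _ rfl (by simp)
  have hi : Mono (((homCx P Y).homologyι 0).unop) := inferInstance
  exact map_eq_zero_iff _ ((ModuleCat.mono_iff_injective _).1 hi)

/-- The class of a cocycle in `Abelian.Ext`. -/
noncomputable def sigma {X : ModuleCat.{u} A} (P : ProjectiveResolution X) (Y : ModuleCat.{u} A) (n : ℕ) :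
    cocyc P Y n →ₗ[A] Abelian.Ext X Y n where
  toFun t := P.extMk (inc P Y n t) (n+1) rfl (inc_comp P Y n t)
  map_add' s t := by
    rw [P.add_extMk]
    congr 1
    exact map_add _ _ _
  map_smul' a t := by
    rw [RingHom.id_apply, Abelian.Ext.smul_eq_comp_mk₀, P.extMk_comp_mk₀]
    congr 1
    rw [map_smul]
    simp

lemma sigma_surj {X : ModuleCat.{u} A} (P : ProjectiveResolution X) (Y : ModuleCat.{u} A) (n : ℕ) :
    Function.Surjective (sigma P Y n) := by
  intro e
  obtain ⟨f, hf, rfl⟩ := P.extMk_surjective e (n+1) rfl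
  obtain ⟨t, rfl⟩ := (inc_range P Y n f).2 hf
  exact ⟨t, rfl⟩

/-- The degree zero analogue of `ProjectiveResolution.extMk_eq_zero_iff`: there are no nonzero
coboundaries. -/
lemma extMk_zero_iff {X Y : ModuleCat.{u} A} (P : ProjectiveResolution X) (f : P.complex.X 0 ⟶ Y)
    (hf : P.complex.d 1 0 ≫ f = 0) : P.extMk f 1 rfl hf = 0 ↔ f = 0 := by
  refine ⟨fun h ↦ ?_, fun h ↦ by subst h; simp⟩
  simp only [← P.extEquivCohomologyClass.apply_eq_iff_eq,
    P.extEquivCohomologyClass_extMk, P.extEquivCohomologyClass_zero,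
    CochainComplex.HomComplex.CohomologyClass.mk_eq_zero_iff] at h
  rw [CochainComplex.HomComplex.Cocycle.toSingleMk_mem_coboundaries_iff _ _ _ _ _ 1 (by simp)] at h
  obtain ⟨g, hg⟩ := h
  have hz : Limits.IsZero (P.cochainComplex.X 1) :=
    HomologicalComplex.isZero_extend_X _ _ _ (fun i ↦ by simp; lia)
  rw [hz.eq_of_src g 0, Limits.comp_zero] at hg
  rw [← cancel_epi (P.cochainComplexXIso (-(0:ℕ)) 0 rfl).hom, ← hg, Limits.comp_zero]

lemma rho_iff_sigma {X : ModuleCat.{u} A} (P : ProjectiveResolution X) (Y : ModuleCat.{u} A) (n : ℕ)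
    (t : cocyc P Y n) : rho P Y n t = 0 ↔ sigma P Y n t = 0 := by
  cases n with
  | zero => rw [rho_eq_zero_zero]; exact (extMk_zero_iff P _ (inc_comp P Y 0 t)).symm
  | succ n => rw [rho_eq_zero_succ]; exact (P.extMk_eq_zero_iff _ _ rfl (inc_comp P Y (n+1) t) n rfl).symm

lemma ker_rho_eq {X : ModuleCat.{u} A} (P : ProjectiveResolution X) (Y : ModuleCat.{u} A) (n : ℕ) :
    LinearMap.ker (rho P Y n) = LinearMap.ker (sigma P Y n) := by
  ext t; exact rho_iff_sigma P Y n t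

/-- The comparison isomorphism: both kinds of `Ext` are the quotient of the cocycles of `Hom(P, Y)`
by the coboundaries, for the chosen projective resolution `P` of `X`. -/
noncomputable def bridge (X Y : ModuleCat.{u} A) (n : ℕ) : OExt A X Y n ≃ₗ[A] Abelian.Ext X Y n :=
  let P := projectiveResolution X
  ((rho P Y n).quotKerEquivOfSurjective (rho_surj P Y n)).symm ≪≫ₗ
    Submodule.quotEquivOfEq _ _ (ker_rho_eq P Y n) ≪≫ₗ
    ((sigma P Y n).quotKerEquivOfSurjective (sigma_surj P Y n))

lemma bridge_rho (X Y : ModuleCat.{u} A) (n : ℕ) (t) :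
    bridge X Y n (rho (projectiveResolution X) Y n t) = sigma (projectiveResolution X) Y n t := by
  have : ((rho (projectiveResolution X) Y n).quotKerEquivOfSurjective (rho_surj _ Y n)).symm
      (rho (projectiveResolution X) Y n t) = Submodule.Quotient.mk t := by
    rw [LinearEquiv.symm_apply_eq]; rfl
  simp only [bridge, LinearEquiv.trans_apply]
  erw [this]
  rfl

/-- Naturality in `X` of the class of a cocycle: a lift `φ` of `g` to the resolutions acts by
precomposition. -/
lemma rho_nat {X X' : ModuleCat.{u} A} (g : X' ⟶ X) (P : ProjectiveResolution X)
    (P' : ProjectiveResolution X') (φ : ProjectiveResolution.Hom P' P g) (Y : ModuleCat.{u} A) (n : ℕ)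
    (t : cocyc P Y n) : ∃ t' : cocyc P' Y n, inc P' Y n t' = φ.hom.f n ≫ inc P Y n t ∧
      ((Ext A (ModuleCat.{u} A) n).map g.op).app Y (rho P Y n t) = rho P' Y n t' := by
  let ψ : homCx P' Y ⟶ homCx P Y :=
    (((linearYoneda A (ModuleCat.{u} A)).obj Y).rightOp.mapHomologicalComplex _).map φ.hom
  refine ⟨(HomologicalComplex.opcyclesMap ψ n).unop.hom t, ?_, ?_⟩
  · exact congr($(HomologicalComplex.p_opcyclesMap ψ n).unop.hom t)
  · have h1 := ProjectiveResolution.isoLeftDerivedObj_hom_naturality g P' P φ.hom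
      φ.hom_f_zero_comp_π_f_zero ((linearYoneda A (ModuleCat.{u} A)).obj Y).rightOp n
    have h2 := HomologicalComplex.homologyι_naturality ψ n
    have h1' := congr(($h1).unop.hom (((homCx P Y).homologyι n).unop.hom t))
    have h2' := congr((rhoIso P' Y n).hom.hom (($h2).unop.hom t))
    exact h1'.trans h2'

lemma bridge_nat {X X' : ModuleCat.{u} A} (g : X' ⟶ X) (Y : ModuleCat.{u} A) (n : ℕ)
    (x : OExt A X Y n) :
    bridge X' Y n (((Ext A (ModuleCat.{u} A) n).map g.op).app Y x) =
      (Abelian.Ext.mk₀ g).comp (bridge X Y n x) (zero_add n) := by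
  obtain ⟨t, rfl⟩ := rho_surj (projectiveResolution X) Y n x
  let φ : ProjectiveResolution.Hom (projectiveResolution X') (projectiveResolution X) g :=
    { hom := ProjectiveResolution.lift g _ _
      hom_f_zero_comp_π_f_zero := ProjectiveResolution.lift_commutes_zero g _ _ }
  obtain ⟨t', h1, h2⟩ := rho_nat g _ _ φ Y n t
  rw [h2, bridge_rho, bridge_rho]
  refine Eq.trans ?_ (ProjectiveResolution.mk₀_comp_extMk _ (n+1) rfl (inc_comp _ Y n t) φ).symm
  simp only [sigma, LinearMap.coe_mk, AddHom.coe_mk, h1]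

/-! ### Elements of local cohomology -/

/-- The projection `A ⧸ I → A ⧸ J` for `I ≤ J`, as a morphism of modules. -/
def quotProj {I J : Ideal A} (h : I ≤ J) : ModuleCat.of A (A ⧸ I) ⟶ ModuleCat.of A (A ⧸ J) :=
  ModuleCat.ofHom (Submodule.mapQ I J LinearMap.id h)

open Limits Opposite in
/-- Elementwise form of `H^i_I(M) = colim Ext^i(A ⧸ I ^ n, M)`: every element comes from some stage,
the maps from the stages are compatible with restriction, and a class that becomes zero in
the limit already becomes zero at a later stage. -/
theorem localCohomology_elements (I : Ideal A) (M : ModuleCat.{u} A) (i : ℕ) :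
    ∃ φ : ∀ n : ℕ, Abelian.Ext (ModuleCat.of A (A ⧸ I ^ n)) M i →ₗ[A] (localCohomology I i).obj M,
      (∀ e, ∃ n x, φ n x = e) ∧
      (∀ n N (h : n ≤ N) x,
        φ N ((Abelian.Ext.mk₀ (quotProj (Ideal.pow_le_pow_right h))).comp x (zero_add i)) = φ n x) ∧
      (∀ n x, φ n x = 0 → ∃ N, ∃ h : n ≤ N,
        (Abelian.Ext.mk₀ (quotProj (I := I ^ N) (J := I ^ n)
          (Ideal.pow_le_pow_right h))).comp x (zero_add i) = 0) := by
  let F := localCohomology.diagram (localCohomology.idealPowersDiagram I) i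
  have hF := localCohomology.hasColimitDiagram.{u, 0} (localCohomology.idealPowersDiagram I) i
  let hc : IsColimit (((evaluation _ _).obj M).mapCocone (colimit.cocone F)) :=
    isColimitOfPreserves _ (colimit.isColimit F)
  have : PreservesFilteredColimitsOfSize.{0, 0} (forget (ModuleCat.{u} A)) :=
    preservesSmallestFilteredColimits_of_preservesFilteredColimits.{u, u} _
  let ι : ∀ n : ℕ, OExt A (ModuleCat.of A (A ⧸ I ^ n)) M i ⟶ (localCohomology I i).obj M :=
    fun n ↦ ((colimit.ι F (op (op n))).app M)
  have hι : ∀ n N (h : n ≤ N) x, (ι N).hom (((Ext A (ModuleCat.{u} A) i).map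
      (quotProj (Ideal.pow_le_pow_right (I := I) h)).op).app M x) = (ι n).hom x := by
    intro n N h x
    have := colimit.w F (homOfLE h).op.op
    exact congr(($this).app M x)
  have h1 : ∀ e, ∃ n x, ι n x = e := by
    intro e
    obtain ⟨n, x, hx⟩ := Concrete.isColimit_exists_rep _ hc e
    exact ⟨n.unop.unop, x, hx⟩
  have h2 : ∀ n x, ι n x = 0 → ∃ N, ∃ h : n ≤ N, (((Ext A (ModuleCat.{u} A) i).map
      (quotProj (Ideal.pow_le_pow_right (I := I) h)).op).app M x) = 0 := by
    intro n x hx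
    obtain ⟨N, f, g, hfg⟩ := Concrete.isColimit_exists_of_rep_eq _ hc (i := op (op n)) (j := op (op n)) x 0
      (hx.trans (map_zero _).symm)
    refine ⟨N.unop.unop, leOfHom f.unop.unop, ?_⟩
    exact hfg.trans (map_zero _)
  refine ⟨fun n ↦ (ι n).hom ∘ₗ (bridge _ M i).symm.toLinearMap, ?_, ?_, ?_⟩
  · intro e
    obtain ⟨n, x, rfl⟩ := h1 e
    exact ⟨n, bridge _ M i x, by simp⟩
  · intro n N h x
    obtain ⟨x, rfl⟩ := (bridge _ M i).surjective x
    rw [← bridge_nat]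
    simp only [LinearMap.coe_comp, Function.comp_apply, LinearEquiv.coe_coe, LinearEquiv.symm_apply_apply]
    exact hι n N h x
  · intro n x hx
    obtain ⟨x, rfl⟩ := (bridge _ M i).surjective x
    obtain ⟨N, h, hN⟩ := h2 n x (by simpa using hx)
    refine ⟨N, h, ?_⟩
    rw [← bridge_nat, hN, map_zero]

/-! ### Regular sequences and `Ext` from `A ⧸ 𝔪 ^ n` -/

lemma quotProj_surjective {I J : Ideal A} (h : I ≤ J) : Function.Surjective (quotProj h) := by
  intro y
  obtain ⟨a, rfl⟩ := Submodule.mkQ_surjective _ y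
  exact ⟨Submodule.Quotient.mk a, rfl⟩

section LocalDepth
open IsLocalRing
variable [IsLocalRing A] {M : Type u} [AddCommGroup M] [Module A M] [Module.Finite A M]

lemma maximalIdeal_smul_lt [Nontrivial M] : maximalIdeal A • (⊤ : Submodule A M) < ⊤ :=
  lt_top_iff_ne_top.2 (Submodule.top_ne_ideal_smul_of_le_jacobson_annihilator
    (IsLocalRing.maximalIdeal_le_jacobson _)).symm

lemma support_quot_pow (n : ℕ) : Module.support A (A ⧸ maximalIdeal A ^ n) ⊆
    PrimeSpectrum.zeroLocus (maximalIdeal A : Set A) := by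
  rw [Module.support_eq_zeroLocus, Ideal.annihilator_quotient]
  intro p hp
  exact Ideal.IsPrime.le_of_pow_le (hP := p.2) hp

variable [IsNoetherianRing A]

lemma ext_subsingleton {rs : List A} (hm : ∀ r ∈ rs, r ∈ maximalIdeal A)
    (hrs : RingTheory.Sequence.IsRegular M rs)
    (N : Type u) [AddCommGroup N] [Module A N] [Module.Finite A N]
    (hN : Module.support A N ⊆ PrimeSpectrum.zeroLocus (maximalIdeal A : Set A)) (i : ℕ) (hi : i < rs.length) :
    Subsingleton (Abelian.Ext (ModuleCat.of A N) (ModuleCat.of A M) i) := by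
  have : Nontrivial M := hrs.nontrivial
  exact ModuleCat.subsingleton_ext_of_exists_isRegular (maximalIdeal A) (ModuleCat.of A N) hN (ModuleCat.of A M)
    maximalIdeal_smul_lt rs hm hrs i hi

/-- In the degree given by the length of a regular sequence, restriction along
`A ⧸ 𝔪 ^ N → A ⧸ 𝔪 ^ n` is injective, because the kernel contributes nothing one degree lower. -/
lemma restrict_injective {rs : List A} (hm : ∀ r ∈ rs, r ∈ maximalIdeal A)
    (hrs : RingTheory.Sequence.IsRegular M rs)
    {n N : ℕ} (h : n ≤ N)
    (x : Abelian.Ext (ModuleCat.of A (A ⧸ maximalIdeal A ^ n)) (ModuleCat.of A M) rs.length)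
    (hx : (Abelian.Ext.mk₀ (quotProj (Ideal.pow_le_pow_right (I := maximalIdeal A) h))).comp x
      (zero_add _) = 0) :
    x = 0 := by
  generalize hl : rs.length = l at x
  set q := quotProj (Ideal.pow_le_pow_right (I := maximalIdeal A) h) with hq
  cases l with
  | zero =>
    have : Epi q := (ModuleCat.epi_iff_surjective _).2 (quotProj_surjective _)
    exact (injective_iff_map_eq_zero _).1
      (Abelian.Ext.precomp_mk₀_injective_of_epi (ModuleCat.of A M) q) x hx
  | succ s =>
    let S : ShortComplex (ModuleCat A) :=
      ModuleCat.shortComplexOfCompEqZero (LinearMap.ker q.hom).subtype q.hom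
        (LinearMap.comp_ker_subtype _)
    have hS : S.ShortExact := ModuleCat.shortComplex_shortExact S
      (LinearMap.exact_subtype_ker_map q.hom) Subtype.val_injective
      (quotProj_surjective (Ideal.pow_le_pow_right h))
    obtain ⟨y, rfl⟩ := Abelian.Ext.contravariant_sequence_exact₃ hS (ModuleCat.of A M) x hx (add_comm 1 s)
    have : Subsingleton (Abelian.Ext (ModuleCat.of A (LinearMap.ker q.hom)) (ModuleCat.of A M) s) := by
      apply ext_subsingleton hm hrs
      · exact (Module.support_subset_of_injective (LinearMap.ker q.hom).subtype
          Subtype.val_injective).trans (support_quot_pow N)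
      · omega
    have hy : y = 0 := this.elim _ _
    rw [hy, Abelian.Ext.comp_zero]

lemma exists_regular_of_ext {k : ℕ} (hk : k ≠ 0) {s : ℕ} [Nontrivial M]
    (h : ∀ i < s, Subsingleton (Abelian.Ext (ModuleCat.of A (A ⧸ maximalIdeal A ^ k)) (ModuleCat.of A M) i)) :
    ∃ rs : List A, rs.length = s ∧ (∀ r ∈ rs, r ∈ maximalIdeal A) ∧
      RingTheory.Sequence.IsRegular M rs := by
  refine ModuleCat.exists_isRegular_of_exists_subsingleton_ext (maximalIdeal A) s (ModuleCat.of A M)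
    maximalIdeal_smul_lt (ModuleCat.of A (A ⧸ maximalIdeal A ^ k)) ?_ h
  change Module.support A (A ⧸ maximalIdeal A ^ k) = _
  rw [Module.support_eq_zeroLocus, Ideal.annihilator_quotient, PrimeSpectrum.zeroLocus_pow _ hk]

/-- If every class in `Ext^i(A ⧸ 𝔪 ^ n, M)` with `i < s` dies in the direct limit over `n`,
then there is an `M`-regular sequence of length `s` in `𝔪`. -/
lemma exists_regular_of_vanish [Nontrivial M] (s : ℕ)
    (hV : ∀ i < s, ∀ n, ∀ x : Abelian.Ext (ModuleCat.of A (A ⧸ maximalIdeal A ^ n)) (ModuleCat.of A M) i,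
      ∃ N, ∃ h : n ≤ N, (Abelian.Ext.mk₀ (quotProj (I := maximalIdeal A ^ N) (J := maximalIdeal A ^ n)
        (Ideal.pow_le_pow_right h))).comp x (zero_add i) = 0) :
    ∃ rs : List A, rs.length = s ∧ (∀ r ∈ rs, r ∈ maximalIdeal A) ∧
      RingTheory.Sequence.IsRegular M rs := by
  induction s with
  | zero => exact ⟨[], rfl, by simp, RingTheory.Sequence.IsRegular.nil A M⟩
  | succ s ih =>
    obtain ⟨rs, rfl, hm, hrs⟩ := ih fun i hi ↦ hV i (by omega)
    refine exists_regular_of_ext one_ne_zero fun i hi ↦ ?_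
    rcases Nat.lt_succ_iff_lt_or_eq.1 hi with hi | rfl
    · exact ext_subsingleton hm hrs _ (support_quot_pow 1) i hi
    · refine subsingleton_of_forall_eq 0 fun x ↦ ?_
      obtain ⟨N, h, hN⟩ := hV _ (by omega) 1 x
      exact restrict_injective hm hrs h x hN
end LocalDepth

/-! ### Depth and dimension -/

lemma extVanishes_iff (X Y : Type u) [AddCommGroup X] [Module A X]
    [AddCommGroup Y] [Module A Y]
    (i : ℕ) :
    extVanishes A X Y i ↔ Subsingleton (Abelian.Ext (ModuleCat.of A X) (ModuleCat.of A Y) i) :=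
  (bridge (ModuleCat.of A X) (ModuleCat.of A Y) i).toEquiv.subsingleton_congr

section CohenMacaulay
open IsLocalRing
variable [IsLocalRing A]

lemma support_residueField : Module.support A (IsLocalRing.ResidueField A) =
    PrimeSpectrum.zeroLocus (maximalIdeal A : Set A) := by
  change Module.support A (A ⧸ maximalIdeal A) = _
  rw [Module.support_eq_zeroLocus, Ideal.annihilator_quotient]

variable [IsNoetherianRing A] {M : Type u} [AddCommGroup M] [Module A M] [Module.Finite A M]

lemma length_le_supportDim {rs : List A} (hrs : RingTheory.Sequence.IsRegular M rs) :
    (rs.length : WithBot ℕ∞) ≤ Module.supportDim A M := by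
  have : Nontrivial (M ⧸ Ideal.ofList rs • (⊤ : Submodule A M)) := hrs.quot_ofList_smul_nontrivial ⊤
  rw [← Module.supportDim_add_length_eq_supportDim_of_isRegular rs hrs]
  have : (0 : WithBot ℕ∞) ≤ Module.supportDim A (M ⧸ Ideal.ofList rs • (⊤ : Submodule A M)) :=
    Order.krullDim_nonneg_iff.2 (Module.nonempty_support_of_nontrivial).to_subtype
  exact le_add_of_nonneg_left this

lemma supportDim_eq_length {rs : List A} (hrs : RingTheory.Sequence.IsRegular M rs) {n : ℕ}
    (hn : maximalIdeal A ^ n ≤ Ideal.ofList rs) : Module.supportDim A M = rs.length := by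
  have : Nontrivial (M ⧸ Ideal.ofList rs • (⊤ : Submodule A M)) := hrs.quot_ofList_smul_nontrivial ⊤
  rw [← Module.supportDim_add_length_eq_supportDim_of_isRegular rs hrs]
  have h1 : Nonempty (Module.support A (M ⧸ Ideal.ofList rs • (⊤ : Submodule A M))) :=
    (Module.nonempty_support_of_nontrivial).to_subtype
  have h2 : ∀ p ∈ Module.support A (M ⧸ Ideal.ofList rs • (⊤ : Submodule A M)),
      p.asIdeal = maximalIdeal A := by
    intro p hp
    rw [Module.support_quotient] at hp
    exact ((IsLocalRing.maximalIdeal.isMaximal A).eq_of_le p.2.ne_top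
      (Ideal.IsPrime.le_of_pow_le (hP := p.2) (hn.trans hp.2))).symm
  have h3 : Subsingleton (Module.support A (M ⧸ Ideal.ofList rs • (⊤ : Submodule A M))) :=
    ⟨fun p q ↦ Subtype.ext (PrimeSpectrum.ext ((h2 _ p.2).trans (h2 _ q.2).symm))⟩
  rw [Module.supportDim, Order.krullDim_eq_zero, zero_add]

lemma moduleDepth_eq_length {rs : List A} (hm : ∀ r ∈ rs, r ∈ maximalIdeal A)
    (hrs : RingTheory.Sequence.IsRegular M rs) (hd : Module.supportDim A M = rs.length) :
    moduleDepth A M = rs.length := by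
  have : Nontrivial M := hrs.nontrivial
  have : Module.Finite A (IsLocalRing.ResidueField A) := inferInstanceAs (Module.Finite A (A ⧸ maximalIdeal A))
  have hlt : ∀ i < rs.length, extVanishes A (IsLocalRing.ResidueField A) M i := fun i hi ↦
    (extVanishes_iff _ _ _).2 (ext_subsingleton hm hrs _ support_residueField.le i hi)
  apply le_antisymm
  · refine sInf_le ⟨rs.length, rfl, fun h ↦ ?_⟩
    obtain ⟨rs', hl, -, h'⟩ := ModuleCat.exists_isRegular_of_exists_subsingleton_ext
      (maximalIdeal A) (rs.length + 1)
      (ModuleCat.of A M) maximalIdeal_smul_lt (ModuleCat.of A (IsLocalRing.ResidueField A))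
      support_residueField (fun i hi ↦ by
        rcases Nat.lt_succ_iff_lt_or_eq.1 hi with hi | rfl
        · exact (extVanishes_iff _ _ _).1 (hlt i hi)
        · exact (extVanishes_iff _ _ _).1 h)
    have := length_le_supportDim h'
    rw [hd, hl] at this
    have : rs.length + 1 ≤ rs.length := by exact_mod_cast this
    omega
  · refine le_sInf ?_
    rintro _ ⟨i, rfl, hi⟩
    have : rs.length ≤ i := by
      by_contra h
      exact hi (hlt i (by omega))
    exact_mod_cast this
end CohenMacaulay

/-! ### Transfer of a regular sequence from the module to the ring -/

lemma smul_ext_eq_zero {M : Type u} [AddCommGroup M] [Module A M] {a : A}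
    {X : ModuleCat.{u} A} (ha : ∀ m : M, a • m = 0) {i : ℕ}
    (x : Abelian.Ext X (ModuleCat.of A M) i) : a • x = 0 := by
  have : a • 𝟙 (ModuleCat.of A M) = 0 := by
    ext m
    exact ha m
  rw [Abelian.Ext.smul_eq_comp_mk₀, this, Abelian.Ext.mk₀_zero, Abelian.Ext.comp_zero]

lemma extClass_comp_comp {S : ShortComplex (ModuleCat.{u} A)} (hS : S.ShortExact)
    {X : ModuleCat.{u} A} {i : ℕ} (y : Abelian.Ext X S.X₃ i) :
    (y.comp hS.extClass (rfl : i + 1 = i + 1)).comp (Abelian.Ext.mk₀ S.f) (add_zero _) = 0 := by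
  rw [Abelian.Ext.comp_assoc_of_third_deg_zero, hS.extClass_comp, Abelian.Ext.comp_zero]

section Exhausts
open IsLocalRing
variable [IsLocalRing A]

/-- The modules `Ext^i(A ⧸ 𝔪 ^ n, M)` embed into `E`, and the union of their images is the set of
elements of `E` killed by `I`. For `E` the `j`-th local cohomology module of a module with a
regular sequence of length `j`, this holds with `i = j` and `I = ⊥`. -/
def ExtExhausts (i : ℕ) (M : Type u) [AddCommGroup M] [Module A M] (I : Ideal A)
    (E : Type u) [AddCommGroup E] [Module A E] : Prop :=
  ∃ φ : ∀ n : ℕ, Abelian.Ext (ModuleCat.of A (A ⧸ maximalIdeal A ^ n)) (ModuleCat.of A M) i →ₗ[A] E,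
    (∀ n, Function.Injective (φ n)) ∧ ∀ e, (∃ n x, φ n x = e) ↔ ∀ a ∈ I, a • e = 0

variable {M : Type u} [AddCommGroup M] [Module A M]
  {E : Type u} [AddCommGroup E] [Module A E]

/-- Dividing `M` by a regular element lowers the degree by one and adds that element to the
annihilating ideal: `Ext^i(-, M ⧸ xM)` is the `x`-torsion of `Ext^(i+1)(-, M)` when
`Ext^i(-, M)` vanishes. -/
lemma ExtExhausts.step {i : ℕ} {I : Ideal A} (h : ExtExhausts (i + 1) M I E) {x : A}
    (hx : IsSMulRegular M x)
    (h0 : ∀ n, Subsingleton (Abelian.Ext (ModuleCat.of A (A ⧸ maximalIdeal A ^ n)) (ModuleCat.of A M) i)) :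
    ExtExhausts i (QuotSMulTop x M) (I ⊔ Ideal.span {x}) E := by
  obtain ⟨φ, hφ, him⟩ := h
  have hS := IsSMulRegular.smulShortComplex_shortExact (M := ModuleCat.of A M) (r := x) hx
  set S := (ModuleCat.of A M).smulShortComplex x with hSdef
  have hf : S.f = x • 𝟙 (ModuleCat.of A M) := rfl
  have hsmul : ∀ {n} (y : Abelian.Ext (ModuleCat.of A (A ⧸ maximalIdeal A ^ n)) (ModuleCat.of A M) (i + 1)),
      x • y = y.comp (Abelian.Ext.mk₀ S.f) (add_zero _) := fun y ↦ by
    rw [hf]; exact Abelian.Ext.smul_eq_comp_mk₀ y x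
  let δ : ∀ n : ℕ, Abelian.Ext (ModuleCat.of A (A ⧸ maximalIdeal A ^ n)) S.X₃ i →ₗ[A]
      Abelian.Ext (ModuleCat.of A (A ⧸ maximalIdeal A ^ n)) (ModuleCat.of A M) (i + 1) := fun n ↦
    { toFun y := Abelian.Ext.comp y hS.extClass rfl
      map_add' y z := Abelian.Ext.add_comp _ _ _ _
      map_smul' a y := Abelian.Ext.smul_comp _ _ _ _ }
  have hδ : ∀ n, Function.Injective (δ n) := fun n ↦ (injective_iff_map_eq_zero _).2 fun y hy ↦ by
    obtain ⟨z, rfl⟩ := Abelian.Ext.covariant_sequence_exact₃ _ hS y rfl hy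
    obtain rfl : z = 0 := (h0 n).elim _ _
    exact Abelian.Ext.zero_comp ..
  have hδx : ∀ n y, x • δ n y = 0 := fun n y ↦ by
    exact (hsmul _).trans (extClass_comp_comp hS y)
  refine ⟨fun n ↦ φ n ∘ₗ δ n, fun n ↦ (hφ n).comp (hδ n), fun e ↦ ⟨?_, fun he ↦ ?_⟩⟩
  · rintro ⟨n, y, rfl⟩ a ha
    obtain ⟨b, hb, c, hc, rfl⟩ := Submodule.mem_sup.1 ha
    obtain ⟨c, rfl⟩ := Ideal.mem_span_singleton'.1 hc
    change (b + c * x) • φ n (δ n y) = 0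
    have hb' : b • φ n (δ n y) = 0 := (him _).1 ⟨n, δ n y, rfl⟩ b hb
    have hx' : ∀ y, x • φ n (δ n y) = 0 := fun y ↦ by rw [← map_smul, hδx, map_zero]
    rw [add_smul, hb', mul_smul, zero_add]
    exact (congrArg (c • ·) (hx' y)).trans (smul_zero c)
  · obtain ⟨n, y, rfl⟩ := (him e).2 fun a ha ↦ he a (Ideal.mem_sup_left ha)
    have hy : x • y = 0 := hφ n (by
      rw [map_smul, map_zero]
      exact he x (Ideal.mem_sup_right (Ideal.mem_span_singleton_self x)))
    rw [hsmul] at hy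
    obtain ⟨z, rfl⟩ := Abelian.Ext.covariant_sequence_exact₁ _ hS y hy rfl
    exact ⟨n, z, rfl⟩

/-- An injective module containing a copy of the residue field has enough elements to
distinguish any ideal `I` from a larger one. -/
lemma exists_smul_ne_zero [Module.Injective A E] {e₀ : E} (he₀ : e₀ ≠ 0)
    (hm : ∀ a ∈ maximalIdeal A, a • e₀ = 0) {I : Ideal A} {a : A} (ha : a ∉ I) :
    ∃ e : E, (∀ b ∈ I, b • e = 0) ∧ a • e ≠ 0 := by
  -- `ker f = (I : a)` lies in `𝔪 ⊆ ker g`, so `a ↦ e₀` extends from `A a ⊆ A ⧸ I` to `A ⧸ I`.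
  let f : A →ₗ[A] A ⧸ I := LinearMap.toSpanSingleton A (A ⧸ I) (Submodule.Quotient.mk a)
  let g : A →ₗ[A] E := LinearMap.toSpanSingleton A E e₀
  have hfg : LinearMap.ker f ≤ LinearMap.ker g := by
    intro r hr
    refine hm r ?_
    by_contra hr'
    have hu : IsUnit r := by simpa using hr'
    have : Submodule.Quotient.mk (p := I) (r • a) = 0 := hr
    rw [Submodule.Quotient.mk_eq_zero, smul_eq_mul] at this
    exact ha ((Ideal.unit_mul_mem_iff_mem I hu).1 this)
  obtain ⟨h, hh⟩ := Module.Injective.out ((LinearMap.ker f).liftQ f le_rfl)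
    (LinearMap.ker_eq_bot.1 (Submodule.ker_liftQ_eq_bot _ _ _ le_rfl))
    ((LinearMap.ker f).liftQ g hfg)
  refine ⟨h (Submodule.Quotient.mk 1), fun b hb ↦ ?_, ?_⟩
  · rw [← map_smul, ← Submodule.Quotient.mk_smul, smul_eq_mul, mul_one,
      (Submodule.Quotient.mk_eq_zero I).2 hb, map_zero]
  · have := hh (Submodule.Quotient.mk 1)
    simp only [Submodule.liftQ_apply, f, g, LinearMap.toSpanSingleton_apply, one_smul] at this
    rw [← map_smul, ← Submodule.Quotient.mk_smul, smul_eq_mul, mul_one, this]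
    exact he₀

/-- `Ext^0(A ⧸ 𝔪 ^ n, M)` is the `𝔪 ^ n`-torsion of the Noetherian module `M`, so a fixed power
of `𝔪` annihilates it for all `n`. -/
lemma ExtExhausts.exists_pow_le [IsNoetherian A M] [Module.Injective A E] {e₀ : E} (he₀ : e₀ ≠ 0)
    (hm : ∀ a ∈ maximalIdeal A, a • e₀ = 0) {I : Ideal A} (h : ExtExhausts 0 M I E) :
    ∃ n, maximalIdeal A ^ n ≤ I := by
  obtain ⟨φ, hφ, him⟩ := h
  let T : ℕ →o Submodule A M :=
    ⟨fun n ↦ Submodule.torsionBySet A M (maximalIdeal A ^ n : Ideal A), fun a b hab ↦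
      Submodule.torsionBySet_le_torsionBySet_of_subset (Ideal.pow_le_pow_right hab)⟩
  obtain ⟨k, hk⟩ := monotone_stabilizes_iff_noetherian.2 ‹IsNoetherian A M› T
  have hT : ∀ n, T n ≤ T k := fun n ↦ by
    rcases le_total n k with hn | hn
    · exact T.monotone hn
    · exact (hk n hn).ge
  refine ⟨k, fun a ha ↦ ?_⟩
  by_contra haI
  obtain ⟨e, he, hae⟩ := exists_smul_ne_zero he₀ hm haI
  obtain ⟨n, x, rfl⟩ := (him e).2 he
  obtain ⟨f, rfl⟩ := (Abelian.Ext.mk₀_bijective _ _).2 x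
  apply hae
  have hf : a • f = 0 := by
    refine ModuleCat.hom_ext (LinearMap.ext fun y ↦ ?_)
    change a • f.hom y = 0
    obtain ⟨r, rfl⟩ := Submodule.mkQ_surjective _ y
    have h1 : f.hom (Submodule.Quotient.mk r) ∈ T n := by
      refine (Submodule.mem_torsionBySet_iff _ _).2 fun b ↦ ?_
      rw [← map_smul, ← Submodule.Quotient.mk_smul, smul_eq_mul,
        (Submodule.Quotient.mk_eq_zero _).2 (Ideal.mul_mem_right r _ b.2), map_zero]
    exact (Submodule.mem_torsionBySet_iff _ _).1 (hT n h1) ⟨a, ha⟩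
  rw [← map_smul, ← Abelian.Ext.mk₀_smul, hf, Abelian.Ext.mk₀_zero, map_zero]

/-- The annihilator of `M` is contained in `I`, because it kills `Ext(-, M)` and hence `E[I]`. -/
lemma ExtExhausts.mem_of_smul_eq_zero [Module.Injective A E] {e₀ : E} (he₀ : e₀ ≠ 0)
    (hm : ∀ a ∈ maximalIdeal A, a • e₀ = 0) {i : ℕ} {I : Ideal A} (h : ExtExhausts i M I E) {b : A}
    (hb : ∀ m : M, b • m = 0) : b ∈ I := by
  obtain ⟨φ, hφ, him⟩ := h
  by_contra hbI
  obtain ⟨e, he, hbe⟩ := exists_smul_ne_zero he₀ hm hbI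
  obtain ⟨n, x, rfl⟩ := (him e).2 he
  rw [← map_smul, smul_ext_eq_zero hb, map_zero] at hbe
  exact hbe rfl

/-- Multiplication by an `M`-regular element is injective on `A ⧸ I`, since the hypotheses make `I`
the annihilator of `M`. -/
lemma ExtExhausts.isSMulRegular [Module.Injective A E] {e₀ : E} (he₀ : e₀ ≠ 0)
    (hm : ∀ a ∈ maximalIdeal A, a • e₀ = 0) {i : ℕ} {I : Ideal A} (h : ExtExhausts i M I E)
    (hI : ∀ a ∈ I, ∀ m : M, a • m = 0) {x : A} (hx : IsSMulRegular M x) :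
    IsSMulRegular (A ⧸ I) x := by
  refine IsSMulRegular.of_right_eq_zero_of_smul fun y hy ↦ ?_
  obtain ⟨b, rfl⟩ := Submodule.mkQ_surjective _ y
  rw [← map_smul] at hy
  have hxb : x * b ∈ I := (Submodule.Quotient.mk_eq_zero I).1 hy
  refine (Submodule.Quotient.mk_eq_zero I).2 (h.mem_of_smul_eq_zero he₀ hm fun m ↦ ?_)
  refine hx.right_eq_zero_of_smul ?_
  rw [← mul_smul]
  exact hI _ hxb m

/-- `(A ⧸ I) ⧸ x(A ⧸ I)` is `A ⧸ (I + (x))`. -/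
noncomputable def quotSMulTopQuotEquiv (I : Ideal A) (x : A) :
    QuotSMulTop x (A ⧸ I) ≃ₗ[A] A ⧸ (I ⊔ Ideal.span {x}) :=
  (Submodule.quotEquivOfEq _ _ (by
    rw [← Submodule.ideal_span_singleton_smul, ← Submodule.range_mkQ I, ← Submodule.map_top,
      ← Submodule.map_smul'', smul_eq_mul, Ideal.mul_top])).trans
    (Submodule.quotientQuotientEquivQuotientSup I (Ideal.span {x}))

/-- If `E` is injective, contains the residue field and is exhausted by `Ext(A ⧸ 𝔪 ^ n, M)` in the
degree equal to the length of an `M`-regular sequence, then the sequence is regular on the ring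
`A ⧸ I` as well, and generates an ideal there containing a power of `𝔪`. -/
lemma ExtExhausts.regular [IsNoetherianRing A] [Module.Injective A E] {e₀ : E} (he₀ : e₀ ≠ 0)
    (hm : ∀ a ∈ maximalIdeal A, a • e₀ = 0) (rs : List A) (hrm : ∀ r ∈ rs, r ∈ maximalIdeal A) :
    ∀ (M : Type u) [AddCommGroup M] [Module A M] [Module.Finite A M] (I : Ideal A),
    RingTheory.Sequence.IsRegular M rs → (∀ a ∈ I, ∀ m : M, a • m = 0) →
    ExtExhausts rs.length M I E →
    (∃ n, maximalIdeal A ^ n ≤ I ⊔ Ideal.ofList rs) ∧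
      RingTheory.Sequence.IsWeaklyRegular (A ⧸ I) rs := by
  induction rs with
  | nil =>
    intro M _ _ _ I _ _ h
    obtain ⟨n, hn⟩ := h.exists_pow_le he₀ hm
    exact ⟨⟨n, hn.trans le_sup_left⟩, RingTheory.Sequence.IsWeaklyRegular.nil _ _⟩
  | cons x rs ih =>
    intro M _ _ _ I hreg hI h
    obtain ⟨hx, hreg'⟩ := (RingTheory.Sequence.isRegular_cons_iff M x rs).1 hreg
    have h' := ExtExhausts.step h hx fun n ↦
      ext_subsingleton hrm hreg (A ⧸ maximalIdeal A ^ n) (support_quot_pow n) _ (by simp)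
    have hI' : ∀ a ∈ I ⊔ Ideal.span {x}, ∀ m : QuotSMulTop x M, a • m = 0 := by
      intro a ha m
      obtain ⟨m, rfl⟩ := Submodule.mkQ_surjective _ m
      obtain ⟨b, hb, c, hc, rfl⟩ := Submodule.mem_sup.1 ha
      obtain ⟨c, rfl⟩ := Ideal.mem_span_singleton'.1 hc
      rw [← map_smul, add_smul, hI b hb, zero_add, mul_comm, mul_smul]
      exact (Submodule.Quotient.mk_eq_zero _).2
        (Submodule.smul_mem_pointwise_smul _ _ _ Submodule.mem_top)
    obtain ⟨⟨n, hn⟩, hw⟩ := ih (fun r hr ↦ hrm r (List.mem_cons_of_mem _ hr)) (QuotSMulTop x M)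
      (I ⊔ Ideal.span {x}) hreg' hI' h'
    refine ⟨⟨n, by rwa [Ideal.ofList_cons, ← sup_assoc]⟩, ?_⟩
    rw [RingTheory.Sequence.isWeaklyRegular_cons_iff]
    exact ⟨h.isSMulRegular he₀ hm hI hx,
      ((quotSMulTopQuotEquiv I x).isWeaklyRegular_congr rs).2 hw⟩
end Exhausts

/-! ### The socle of local cohomology, and the conclusion -/

lemma pow_smul_ext_eq_zero {I : Ideal A} {a : A} (ha : a ∈ I) {Y : ModuleCat.{u} A} {i : ℕ}
    (x : Abelian.Ext (ModuleCat.of A (A ⧸ I)) Y i) : a • x = 0 := by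
  have h : a • 𝟙 (ModuleCat.of A (A ⧸ I)) = 0 := by
    refine ModuleCat.hom_ext (LinearMap.ext fun y ↦ ?_)
    change a • y = 0
    obtain ⟨r, rfl⟩ := Submodule.mkQ_surjective _ y
    exact (Submodule.Quotient.mk_eq_zero I).2 (Ideal.mul_mem_right r I ha)
  rw [← Abelian.Ext.mk₀_id_comp x, ← Abelian.Ext.smul_comp, ← Abelian.Ext.mk₀_smul, h,
    Abelian.Ext.mk₀_zero, Abelian.Ext.zero_comp]

/-- A nonzero element killed by a power of an ideal has a nonzero multiple killed by the ideal. -/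
lemma exists_ne_zero_killed {E : Type u} [AddCommGroup E] [Module A E] (I : Ideal A) (n : ℕ) :
    ∀ e : E, e ≠ 0 → (∀ a ∈ I ^ n, a • e = 0) → ∃ e₀ : E, e₀ ≠ 0 ∧ ∀ a ∈ I, a • e₀ = 0 := by
  induction n with
  | zero => exact fun e he h ↦ absurd ((one_smul A e).symm.trans (h 1 (by simp))) he
  | succ n ih =>
    intro e he h
    by_cases h' : ∀ a ∈ I, a • e = 0
    · exact ⟨e, he, h'⟩
    · push Not at h'
      obtain ⟨a, ha, hae⟩ := h'
      refine ih (a • e) hae fun b hb ↦ ?_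
      rw [← mul_smul]
      exact h _ (by rw [pow_succ]; exact Ideal.mul_mem_mul hb ha)
end Helpers

theorem statement8 (A : Type u) [CommRing A] [IsNoetherianRing A] [IsLocalRing A]
    [IsAdicComplete (IsLocalRing.maximalIdeal A) A]
    (M : Type u) [AddCommGroup M] [Module A M] [Module.Finite A M] [Nontrivial M]
    (j : ℕ)
    (hvanish : ∀ i : ℕ, i ≠ j →
      Subsingleton ↥((localCohomology (IsLocalRing.maximalIdeal A) i).obj (ModuleCat.of A M)))
    (hinj : Module.Injective A
      ↥((localCohomology (IsLocalRing.maximalIdeal A) j).obj (ModuleCat.of A M))) :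
    moduleDepth A A = (j : ℕ∞) ∧ ringKrullDim A = (j : ℕ) ∧
      moduleDepth A M = (j : ℕ∞) ∧
      Order.krullDim ↥(Module.support A M) = (j : ℕ) := by
  have hV : ∀ i, Subsingleton ↥((localCohomology (IsLocalRing.maximalIdeal A) i).obj
      (ModuleCat.of A M)) → ∀ n, ∀ x : Abelian.Ext
        (ModuleCat.of A (A ⧸ IsLocalRing.maximalIdeal A ^ n)) (ModuleCat.of A M) i,
      ∃ N, ∃ h : n ≤ N, (Abelian.Ext.mk₀ (quotProj (I := IsLocalRing.maximalIdeal A ^ N)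
        (J := IsLocalRing.maximalIdeal A ^ n)
        (Ideal.pow_le_pow_right h))).comp x (zero_add i) = 0 := by
    intro i hi n x
    obtain ⟨φ, -, -, h⟩ := localCohomology_elements (IsLocalRing.maximalIdeal A) (ModuleCat.of A M) i
    exact h n x (hi.elim _ _)
  obtain ⟨rs, rfl, hm, hrs⟩ := exists_regular_of_vanish (M := M) j fun i hi ↦
    hV i (hvanish i hi.ne)
  obtain ⟨φ, h1, -, h3⟩ := localCohomology_elements (IsLocalRing.maximalIdeal A)
    (ModuleCat.of A M) rs.length
  have hex : ExtExhausts (A := A) rs.length M ⊥ ↥((localCohomology (IsLocalRing.maximalIdeal A)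
      rs.length).obj (ModuleCat.of A M)) := by
    refine ⟨φ, fun n ↦ (injective_iff_map_eq_zero _).2 fun x hx ↦ ?_, fun e ↦
      ⟨fun _ a ha ↦ ?_, fun _ ↦ h1 e⟩⟩
    · obtain ⟨N, h, hN⟩ := h3 n x hx
      exact restrict_injective hm hrs h x hN
    · obtain rfl : a = 0 := ha
      exact zero_smul A e
  -- If the remaining local cohomology module vanished too, `M` would have regular sequences of
  -- every length, contradicting the finiteness of its dimension.
  have hE : Nontrivial ↥((localCohomology (IsLocalRing.maximalIdeal A) rs.length).obj
      (ModuleCat.of A M)) := by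
    by_contra hE
    rw [not_nontrivial_iff_subsingleton] at hE
    obtain ⟨d, hd⟩ : ∃ d : ℕ, ringKrullDim A < d := by
      have := ringKrullDim_lt_top (R := A)
      cases h : ringKrullDim A with
      | bot => exact ⟨0, WithBot.bot_lt_coe _⟩
      | coe a =>
        rw [h] at this
        obtain ⟨k, rfl⟩ := ENat.ne_top_iff_exists.1 (WithBot.coe_lt_coe.1 this).ne
        exact ⟨k + 1, by exact_mod_cast Nat.lt_succ_self k⟩
    obtain ⟨rs', hl, -, hrs'⟩ := exists_regular_of_vanish (M := M) d fun i _ ↦ hV i (by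
      rcases eq_or_ne i rs.length with rfl | hi
      · exact hE
      · exact hvanish i hi)
    have := (length_le_supportDim hrs').trans (Module.supportDim_le_ringKrullDim A M)
    rw [hl] at this
    exact absurd hd this.not_gt
  obtain ⟨e, he⟩ := exists_ne (0 : ↥((localCohomology (IsLocalRing.maximalIdeal A)
    rs.length).obj (ModuleCat.of A M)))
  obtain ⟨n, x, rfl⟩ := h1 e
  obtain ⟨e₀, he₀, hme₀⟩ := exists_ne_zero_killed (IsLocalRing.maximalIdeal A) n _ he fun a ha ↦ by
    rw [← map_smul (φ n), pow_smul_ext_eq_zero ha, map_zero]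
  obtain ⟨⟨k, hk⟩, hw⟩ := ExtExhausts.regular he₀ hme₀ rs hm M ⊥ hrs
    (fun a ha m ↦ by rw [(Submodule.mem_bot A).1 ha, zero_smul A]) hex
  rw [bot_sup_eq] at hk
  have hA : RingTheory.Sequence.IsRegular A rs :=
    (IsLocalRing.isRegular_iff_isWeaklyRegular_of_subset_maximalIdeal hm).2
      (((Submodule.quotEquivOfEqBot ⊥ rfl).isWeaklyRegular_congr rs).1 hw)
  have hdA := supportDim_eq_length hA hk
  have hdM := supportDim_eq_length hrs hk
  exact ⟨moduleDepth_eq_length hm hA hdA, (Module.supportDim_self_eq_ringKrullDim A).symm.trans hdA,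
    moduleDepth_eq_length hm hrs hdM, hdM⟩
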